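/- arXiv:1911.10852 — 4 statements merged into one kernel-verified Lean document; each statement's English description precedes it below -/
import Mathlib

section
/- Let α > 0 and let a, b, c be real numbers. Set d = ac − b², τ = a + c, D = √((1−d)² + τ²), C = (1−d)/D and S = −τ/D. Let A : ℝ → ℝ be a smooth 1-periodic function with ∫₀¹ A(x) dx = −α·D. Then there exists a smooth 1-periodic function φ : ℝ → ℝ with 1 + φ''(x) > 0 for all x, such that for all x ∈ ℝ: −(1/4)·(d²/dx²)(1/(1+φ''(x))) − α·b²·(1+φ''(x))/(C − c·S) + α·(c²+1)/(c·S − C) = A(x). -/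
open MeasureTheory Set Filter Topology

lemma aux_smooth {F f : ℝ → ℝ} (hF : ∀ x, HasDerivAt F (f x) x)
    (hf : ContDiff ℝ (⊤ : ℕ∞) f) : ContDiff ℝ (⊤ : ℕ∞) F := by
  rw [contDiff_infty_iff_deriv]
  refine ⟨fun x => (hF x).differentiableAt, ?_⟩
  have : deriv F = f := funext fun x => (hF x).deriv
  rwa [this]

lemma aux_bdd {f : ℝ → ℝ} (hf : Continuous f) (hp : Function.Periodic f 1) :
    ∃ K : ℝ, 0 < K ∧ ∀ x, |f x| ≤ K := by
  obtain ⟨K, hK⟩ := (hp.isBounded_of_continuous one_ne_zero hf).exists_norm_le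
  refine ⟨max K 1, lt_of_lt_of_le one_pos (le_max_right _ _), fun x => ?_⟩
  exact (hK _ (mem_range_self x)).trans (le_max_left _ _)

lemma aux_antideriv {f : ℝ → ℝ} (hf : ContDiff ℝ (⊤ : ℕ∞) f) (hp : Function.Periodic f 1)
    (h0 : ∫ x in (0 : ℝ)..1, f x = 0) :
    ∃ F : ℝ → ℝ, (∀ x, HasDerivAt F (f x) x) ∧ ContDiff ℝ (⊤ : ℕ∞) F ∧
      Function.Periodic F 1 ∧ ∫ x in (0 : ℝ)..1, F x = 0 := by
  have hc := hf.continuous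
  let G : ℝ → ℝ := fun x => ∫ t in (0 : ℝ)..x, f t
  have hG : ∀ x, HasDerivAt G (f x) x := fun x =>
    intervalIntegral.integral_hasDerivAt_right (hc.intervalIntegrable _ _)
      hc.aestronglyMeasurable.stronglyMeasurableAtFilter hc.continuousAt
  have hGc : Continuous G := continuous_iff_continuousAt.2 fun x => (hG x).continuousAt
  have hGp : Function.Periodic G 1 := by
    intro x
    have h1 := hp.intervalIntegral_add_eq x 0
    rw [zero_add, h0] at h1
    have h2 := intervalIntegral.integral_add_adjacent_intervals
      (hc.intervalIntegrable (μ := volume) 0 x) (hc.intervalIntegrable x (x + 1))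
    simp only [G]
    linarith
  let F : ℝ → ℝ := fun x => G x - ∫ t in (0 : ℝ)..1, G t
  have hF : ∀ x, HasDerivAt F (f x) x := fun x => (hG x).sub_const _
  refine ⟨F, hF, aux_smooth hF hf, fun x => by simp only [F, hGp x], ?_⟩
  simp only [F]
  rw [intervalIntegral.integral_sub (hGc.intervalIntegrable _ _) (by simp)]
  simp

lemma aux_antideriv2 {f : ℝ → ℝ} (hf : ContDiff ℝ (⊤ : ℕ∞) f) (hp : Function.Periodic f 1)
    (h0 : ∫ x in (0 : ℝ)..1, f x = 0) :
    ∃ F F' : ℝ → ℝ, (∀ x, HasDerivAt F (F' x) x) ∧ (∀ x, HasDerivAt F' (f x) x) ∧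
      ContDiff ℝ (⊤ : ℕ∞) F ∧ Function.Periodic F 1 ∧ Function.Periodic F' 1 := by
  obtain ⟨F', h1, h2, h3, h4⟩ := aux_antideriv hf hp h0
  obtain ⟨F, g1, g2, g3, g4⟩ := aux_antideriv h2 h3 h4
  exact ⟨F, F', g1, h1, g2, g3, h3⟩

lemma aux_comp1 {m K : ℝ} (hm : 0 < m) {p p' : ℝ → ℝ} (hp : ∀ x, HasDerivAt p (p' x) x)
    (hK : ∀ x, |p x| ≤ K) (h : ∀ x, 0 ≤ p' x + m * p x) : ∀ x, 0 ≤ p x := by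
  intro x
  have hd : ∀ x, HasDerivAt (fun x => Real.exp (m * x) * p x)
      (Real.exp (m * x) * (p' x + m * p x)) x := by
    intro x
    have h1 : HasDerivAt (fun x => Real.exp (m * x)) (Real.exp (m * x) * (m * 1)) x :=
      ((hasDerivAt_id x).const_mul m).exp
    refine (h1.fun_mul (hp x)).congr_deriv ?_
    ring
  have hmono : Monotone (fun x => Real.exp (m * x) * p x) :=
    monotone_of_deriv_nonneg (fun x => (hd x).differentiableAt) fun x => by
      rw [(hd x).deriv]; exact mul_nonneg (Real.exp_pos _).le (h x)
  have ht : Tendsto (fun x => Real.exp (m * x) * p x) atBot (𝓝 0) := by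
    have h1 : Tendsto (fun x => Real.exp (m * x)) atBot (𝓝 0) :=
      Real.tendsto_exp_atBot.comp (tendsto_id.const_mul_atBot hm)
    have h2 : Tendsto (fun x => Real.exp (m * x) * K) atBot (𝓝 0) := by
      simpa using h1.mul_const K
    refine squeeze_zero_norm (fun x => ?_) h2
    rw [norm_mul, Real.norm_eq_abs, Real.norm_eq_abs, abs_of_pos (Real.exp_pos _)]
    exact mul_le_mul_of_nonneg_left (hK x) (Real.exp_pos _).le
  have := hmono.le_of_tendsto ht x
  exact nonneg_of_mul_nonneg_right this (Real.exp_pos _)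

lemma aux_refl {p : ℝ → ℝ} {p' x : ℝ} (hp : HasDerivAt p p' (-x)) :
    HasDerivAt (fun y => p (-y)) (-p') x := by
  have := HasDerivAt.comp x hp (hasDerivAt_neg x)
  simpa [Function.comp_def] using this

lemma aux_comp2 {m K K' : ℝ} (hm : 0 < m) {w w' w'' : ℝ → ℝ}
    (hw : ∀ x, HasDerivAt w (w' x) x) (hw' : ∀ x, HasDerivAt w' (w'' x) x)
    (hK : ∀ x, |w x| ≤ K) (hK' : ∀ x, |w' x| ≤ K')
    (h : ∀ x, 0 ≤ m ^ 2 * w x - w'' x) : ∀ x, 0 ≤ w x := by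
  have hq : ∀ x, 0 ≤ m * w x - w' x := by
    refine aux_comp1 (K := m * K + K') hm (fun x => ((hw x).const_mul m).sub (hw' x)) ?_ ?_
    · intro x
      refine (abs_sub _ _).trans (add_le_add ?_ (hK' x))
      rw [abs_mul, abs_of_pos hm]
      exact mul_le_mul_of_nonneg_left (hK x) hm.le
    · intro x
      have := h x
      nlinarith
  have h2 : ∀ x, 0 ≤ w (-x) := by
    refine aux_comp1 (K := K) hm (fun x => aux_refl (hw (-x))) (fun x => hK _) ?_
    intro x
    have := hq (-x)
    linarith
  intro x
  simpa using h2 (-x)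

lemma aux_exist1 {m K : ℝ} (hm : 0 < m) {f : ℝ → ℝ} (hf : Continuous f)
    (hK : ∀ x, |f x| ≤ K) :
    ∃ p : ℝ → ℝ, (∀ x, HasDerivAt p (f x - m * p x) x) ∧ ∀ x, |p x| ≤ K / m := by
  let g : ℝ → ℝ := fun y => Real.exp (m * y) * f y
  have hg : Continuous g := by fun_prop
  have hgb : ∀ y, ‖g y‖ ≤ Real.exp (m * y) * K := by
    intro y
    simp only [g]
    rw [norm_mul, Real.norm_eq_abs, Real.norm_eq_abs, abs_of_pos (Real.exp_pos _)]
    exact mul_le_mul_of_nonneg_left (hK y) (Real.exp_pos _).le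
  have hgi : ∀ x, IntegrableOn g (Iic x) := fun x =>
    Integrable.mono' ((integrableOn_exp_mul_Iic hm x).mul_const K)
      hg.aestronglyMeasurable (ae_of_all _ hgb)
  have hI : ∀ x, HasDerivAt (fun x => ∫ y in Iic x, g y) (g x) x := by
    intro x
    have h1 : HasDerivAt (fun u => ∫ t in (0 : ℝ)..u, g t) (g x) x :=
      intervalIntegral.integral_hasDerivAt_right (hg.intervalIntegrable _ _)
        hg.aestronglyMeasurable.stronglyMeasurableAtFilter hg.continuousAt
    have h2 : (fun x => ∫ y in Iic x, g y)
        = fun x => (∫ t in (0 : ℝ)..x, g t) + ∫ y in Iic (0 : ℝ), g y := by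
      funext x
      rw [← intervalIntegral.integral_Iic_sub_Iic (hgi 0) (hgi x)]
      ring
    rw [h2]
    exact h1.add_const _
  have hbd : ∀ x, |∫ y in Iic x, g y| ≤ Real.exp (m * x) / m * K := by
    intro x
    have := norm_integral_le_of_norm_le ((integrableOn_exp_mul_Iic hm x).mul_const K)
      (ae_of_all _ hgb)
    rwa [integral_mul_const, integral_exp_mul_Iic hm] at this
  refine ⟨fun x => Real.exp (-(m * x)) * ∫ y in Iic x, g y, fun x => ?_, fun x => ?_⟩
  · have h1 : HasDerivAt (fun x => Real.exp (-(m * x))) (Real.exp (-(m * x)) * (-(m * 1))) x :=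
      ((hasDerivAt_id x).const_mul m).neg.exp
    refine (h1.fun_mul (hI x)).congr_deriv ?_
    simp only [g]
    rw [← mul_assoc (Real.exp (-(m * x))) (Real.exp (m * x)), ← Real.exp_add]
    simp
    ring
  · rw [abs_mul, abs_of_pos (Real.exp_pos _)]
    calc _ ≤ Real.exp (-(m * x)) * (Real.exp (m * x) / m * K) :=
          mul_le_mul_of_nonneg_left (hbd x) (Real.exp_pos _).le
      _ = (Real.exp (-(m * x)) * Real.exp (m * x)) * (K / m) := by ring
      _ = K / m := by rw [← Real.exp_add]; simp

lemma aux_exist2 {m K : ℝ} (hm : 0 < m) {f : ℝ → ℝ} (hf : Continuous f)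
    (hK : ∀ x, |f x| ≤ K) :
    ∃ w w' : ℝ → ℝ, ∃ L L' : ℝ, (∀ x, HasDerivAt w (w' x) x) ∧
      (∀ x, HasDerivAt w' (m ^ 2 * w x - f x) x) ∧ (∀ x, |w x| ≤ L) ∧ (∀ x, |w' x| ≤ L') := by
  obtain ⟨p, hp, hpb⟩ := aux_exist1 hm hf hK
  have hpc : Continuous p := continuous_iff_continuousAt.2 fun x => (hp x).continuousAt
  obtain ⟨r, hr, hrb⟩ := aux_exist1 (f := fun x => p (-x)) hm (by fun_prop) (fun x => hpb _)
  have hw : ∀ x, HasDerivAt (fun y => r (-y)) (m * r (-x) - p x) x := by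
    intro x
    convert aux_refl (hr (-x)) using 1
    simp
  refine ⟨fun x => r (-x), fun x => m * r (-x) - p x, K / m / m, m * (K / m / m) + K / m,
    hw, fun x => ?_, fun x => hrb _, fun x => ?_⟩
  · refine (((hw x).const_mul m).fun_sub (hp x)).congr_deriv ?_
    ring
  · refine (abs_sub _ _).trans (add_le_add ?_ (hpb x))
    rw [abs_mul, abs_of_pos hm]
    exact mul_le_mul_of_nonneg_left (hrb _) hm.le

lemma aux_scalar {k ε B : ℝ} (hk : 0 < k) (hε : 0 < ε) {x y : ℝ} (hx : ε ≤ x) (hxy : x ≤ y)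
    (hy : y ≤ B) :
    0 ≤ (k / ε ^ 2 * y + k / y) - (k / ε ^ 2 * x + k / x) ∧
    (k / ε ^ 2 * y + k / y) - (k / ε ^ 2 * x + k / x) ≤ (k / ε ^ 2 - k / B ^ 2) * (y - x) := by
  have hx0 : 0 < x := by linarith
  have hy0 : 0 < y := by linarith
  have hB0 : 0 < B := by linarith
  have e : (k / ε ^ 2 * y + k / y) - (k / ε ^ 2 * x + k / x)
      = (k / ε ^ 2 - k / (x * y)) * (y - x) := by
    field_simp
    ring
  rw [e]
  have h1 : k / (x * y) ≤ k / ε ^ 2 := by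
    apply div_le_div_of_nonneg_left hk.le (by positivity)
    nlinarith
  have h2 : k / B ^ 2 ≤ k / (x * y) := by
    apply div_le_div_of_nonneg_left hk.le (by positivity)
    nlinarith
  exact ⟨mul_nonneg (by linarith) (by linarith),
    mul_le_mul_of_nonneg_right (by linarith) (by linarith)⟩

open BoundedContinuousFunction in
lemma aux_sing {k : ℝ} (hk : 0 < k) {h : ℝ → ℝ} (hh : ContDiff ℝ (⊤ : ℕ∞) h)
    (hper : Function.Periodic h 1) (hint : 0 < ∫ x in (0 : ℝ)..1, h x) :
    ∃ v v' : ℝ → ℝ, (∀ x, 0 < v x) ∧ Function.Periodic v 1 ∧ Function.Periodic v' 1 ∧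
      (∀ x, HasDerivAt v (v' x) x) ∧ (∀ x, HasDerivAt v' (h x - k / v x) x) := by
  have hhc := hh.continuous
  set μ := ∫ x in (0 : ℝ)..1, h x with hμ
  -- the upper solution
  obtain ⟨H, H', hH, hH', hHs, hHp, hHp'⟩ := aux_antideriv2 (f := fun x => h x - μ)
    (hh.sub contDiff_const) (fun x => by simp only [hper x]) (by
      rw [intervalIntegral.integral_sub (hhc.intervalIntegrable _ _) (by simp)]
      simp [hμ])
  have hHc := hHs.continuous
  have hHc' : Continuous H' := continuous_iff_continuousAt.2 fun x => (hH' x).continuousAt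
  obtain ⟨Kh, hKh0, hKh⟩ := aux_bdd hhc hper
  obtain ⟨KH, hKH0, hKH⟩ := aux_bdd hHc hHp
  obtain ⟨KH', hKH0', hKH'⟩ := aux_bdd hHc' hHp'
  obtain ⟨ε, hεd⟩ : ∃ ε, ε = k / Kh := ⟨_, rfl⟩
  have hε : 0 < ε := by rw [hεd]; positivity
  have hkε : k / ε = Kh := by rw [hεd]; field_simp
  let β : ℝ → ℝ := fun x => H x + (KH + ε + k / μ)
  have hβε : ∀ x, ε ≤ β x := fun x => by
    have := (abs_le.1 (hKH x)).1
    have h2 : 0 < k / μ := by positivity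
    simp only [β]; linarith
  have hβμ : ∀ x, k / β x ≤ μ := fun x => by
    have := (abs_le.1 (hKH x)).1
    rw [div_le_iff₀ (hε.trans_le (hβε x))]
    have h2 : k / μ ≤ β x := by simp only [β]; linarith
    rw [div_le_iff₀ hint] at h2
    linarith
  obtain ⟨B, hB⟩ : ∃ B, ∀ x, β x ≤ B := ⟨KH + (KH + ε + k / μ), fun x => by
    have := (abs_le.1 (hKH x)).2
    simp only [β]; linarith⟩
  have hβc : Continuous β := by fun_prop
  have hβd : ∀ x, HasDerivAt β (H' x) x := fun x => (hH x).add_const _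
  have hβp : Function.Periodic β 1 := fun x => by simp only [β, hHp x]
  have hεB : ε ≤ B := (hβε 0).trans (hB 0)
  have hβb : ∀ x, |β x| ≤ B := fun x => by
    rw [abs_of_pos (hε.trans_le (hβε x))]; exact hB x
  have hB0 : 0 < B := by linarith
  obtain ⟨M, hM⟩ : ∃ M, M = k / ε ^ 2 := ⟨_, rfl⟩
  have hM0 : 0 < M := by rw [hM]; positivity
  obtain ⟨m, hm, hmM⟩ : ∃ m : ℝ, 0 < m ∧ m ^ 2 = M := ⟨√M, Real.sqrt_pos.2 hM0, Real.sq_sqrt hM0.le⟩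
  let F : (ℝ →ᵇ ℝ) → ℝ → ℝ := fun u x => M * u x + k / max (u x) ε - h x
  have hFc : ∀ u, Continuous (F u) := by
    intro u
    have h1 : Continuous fun x => k / max (u x) ε := by
      refine continuous_const.div (by fun_prop) fun x => ?_
      exact (hε.trans_le (le_max_right _ _)).ne'
    exact ((continuous_const.mul u.continuous).add h1).sub hhc
  have hFb : ∀ u : ℝ →ᵇ ℝ, ∀ x, |F u x| ≤ M * ‖u‖ + k / ε + Kh := by
    intro u x
    have h1 : |M * u x| ≤ M * ‖u‖ := by
      rw [abs_mul, abs_of_pos hM0]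
      exact mul_le_mul_of_nonneg_left (u.norm_coe_le_norm x) hM0.le
    have h2 : |k / max (u x) ε| ≤ k / ε := by
      have h3 : ε ≤ max (u x) ε := le_max_right _ _
      have h4 := hε.trans_le h3
      rw [abs_of_pos (by positivity)]
      exact div_le_div_of_nonneg_left hk.le hε h3
    refine (abs_sub _ _).trans (add_le_add ((abs_add_le _ _).trans (add_le_add h1 h2)) (hKh x))
  have hex : ∀ u : ℝ →ᵇ ℝ, ∃ w : ℝ →ᵇ ℝ, ∃ w' : ℝ → ℝ, ∃ L' : ℝ,
      (∀ x, HasDerivAt w (w' x) x) ∧ (∀ x, HasDerivAt w' (M * w x - F u x) x) ∧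
      (∀ x, |w' x| ≤ L') := by
    intro u
    obtain ⟨w, w', L, L', h1, h2, h3, h4⟩ := aux_exist2 hm (hFc u) (hFb u)
    rw [hmM] at h2
    exact ⟨ofNormedAddCommGroup w (continuous_iff_continuousAt.2 fun x => (h1 x).continuousAt)
      L h3, w', L', h1, h2, h4⟩
  choose T T' L' hT hT' hL' using hex
  have hTb : ∀ u x, |T u x| ≤ ‖T u‖ := fun u x => (T u).norm_coe_le_norm x
  let s : Set (ℝ →ᵇ ℝ) := {u | ∀ x, ε ≤ u x ∧ u x ≤ β x ∧ u (x + 1) = u x}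
  have hsclosed : IsClosed s := by
    have : s = ⋂ x : ℝ, {u : ℝ →ᵇ ℝ | ε ≤ u x ∧ u x ≤ β x ∧ u (x + 1) = u x} := by
      ext u; simp [s]
    rw [this]
    refine isClosed_iInter fun x => ?_
    have hc : ∀ y : ℝ, Continuous fun u : ℝ →ᵇ ℝ => u y := fun y =>
      (lipschitz_eval_const y).continuous
    exact (isClosed_le continuous_const (hc x)).inter
      ((isClosed_le (hc x) continuous_const).inter (isClosed_eq (hc _) (hc x)))
  have hFs : ∀ u ∈ s, ∀ x, F u x = M * u x + k / u x - h x := by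
    intro u hu x
    simp only [F]
    rw [max_eq_left (hu x).1]
  have hmaps : MapsTo T s s := by
    intro u hu
    have hlow : ∀ x, 0 ≤ T u x - ε := by
      refine aux_comp2 (K := ‖T u‖ + |ε|) hm (fun x => (hT u x).sub_const ε) (hT' u)
        (fun x => (abs_sub _ _).trans (add_le_add (hTb u x) le_rfl)) (hL' u) ?_
      intro x
      rw [hmM, hFs u hu x]
      have h1 := (aux_scalar hk hε le_rfl (hu x).1 ((hu x).2.1.trans (hB x))).1
      rw [← hM, hkε] at h1
      have h2 := (abs_le.1 (hKh x)).2
      linarith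
    have hup : ∀ x, 0 ≤ β x - T u x := by
      refine aux_comp2 (K := B + ‖T u‖) (K' := KH' + L' u) hm
        (fun x => (hβd x).sub (hT u x)) (fun x => (hH' x).sub (hT' u x))
        (fun x => (abs_sub _ _).trans (add_le_add (hβb x) (hTb u x)))
        (fun x => (abs_sub _ _).trans (add_le_add (hKH' x) (hL' u x))) ?_
      intro x
      rw [hmM, hFs u hu x]
      have h1 := (aux_scalar hk hε (hu x).1 (hu x).2.1 (hB x)).1
      rw [← hM] at h1
      have h2 := hβμ x
      linarith
    have hshift : ∀ x, HasDerivAt (fun y => T u (y + 1)) (T' u (x + 1)) x :=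
      fun x => (hT u (x + 1)).comp_add_const x 1
    have hshift' : ∀ x, HasDerivAt (fun y => T' u (y + 1)) (M * T u (x + 1) - F u (x + 1)) x :=
      fun x => (hT' u (x + 1)).comp_add_const x 1
    have hFp : ∀ x, F u (x + 1) = F u x := fun x => by
      simp only [F, (hu x).2.2, hper x]
    have hp1 : ∀ x, 0 ≤ T u (x + 1) - T u x := by
      refine aux_comp2 (K := ‖T u‖ + ‖T u‖) (K' := L' u + L' u) hm
        (fun x => (hshift x).sub (hT u x)) (fun x => (hshift' x).sub (hT' u x))
        (fun x => (abs_sub _ _).trans (add_le_add (hTb u _) (hTb u x)))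
        (fun x => (abs_sub _ _).trans (add_le_add (hL' u _) (hL' u x))) ?_
      intro x
      rw [hmM, hFp x]
      linarith
    have hp2 : ∀ x, 0 ≤ T u x - T u (x + 1) := by
      refine aux_comp2 (K := ‖T u‖ + ‖T u‖) (K' := L' u + L' u) hm
        (fun x => (hT u x).sub (hshift x)) (fun x => (hT' u x).sub (hshift' x))
        (fun x => (abs_sub _ _).trans (add_le_add (hTb u _) (hTb u _)))
        (fun x => (abs_sub _ _).trans (add_le_add (hL' u _) (hL' u _))) ?_
      intro x
      rw [hmM, hFp x]
      linarith
    intro x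
    exact ⟨by linarith [hlow x], by linarith [hup x], by linarith [hp1 x, hp2 x]⟩
  obtain ⟨κ, hκ⟩ : ∃ κ, κ = k / ε ^ 2 - k / B ^ 2 := ⟨_, rfl⟩
  have hκ0 : 0 ≤ κ := by
    rw [hκ, sub_nonneg]
    exact div_le_div_of_nonneg_left hk.le (by positivity) (pow_le_pow_left₀ hε.le hεB 2)
  have hκM : κ < M := by
    have : 0 < k / B ^ 2 := by positivity
    rw [hκ, hM]; linarith
  have hFlip : ∀ u ∈ s, ∀ v ∈ s, ∀ x, F u x - F v x ≤ κ * dist u v := by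
    intro u hu v hv x
    rw [hFs u hu, hFs v hv]
    have hd : |u x - v x| ≤ dist u v := by
      rw [← Real.dist_eq]; exact dist_coe_le_dist x
    rcases le_total (u x) (v x) with hle | hle
    · have h1 := (aux_scalar hk hε (hu x).1 hle ((hv x).2.1.trans (hB x))).1
      rw [← hM] at h1
      have : 0 ≤ κ * dist u v := mul_nonneg hκ0 dist_nonneg
      linarith
    · have h1 := (aux_scalar hk hε (hv x).1 hle ((hu x).2.1.trans (hB x))).2
      rw [← hκ, ← hM] at h1
      have : κ * (u x - v x) ≤ κ * dist u v :=
        mul_le_mul_of_nonneg_left ((le_abs_self _).trans hd) hκ0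
      linarith
  have hTlip : ∀ u ∈ s, ∀ v ∈ s, ∀ x, T u x - T v x ≤ κ / M * dist u v := by
    intro u hu v hv
    have : ∀ x, 0 ≤ κ / M * dist u v - (T u x - T v x) := by
      refine aux_comp2 (K := |κ / M * dist u v| + (‖T u‖ + ‖T v‖)) (K' := L' u + L' v) hm
        (w' := fun x => -(T' u x - T' v x))
        (fun x => ((hT u x).sub (hT v x)).const_sub _)
        (fun x => ((hT' u x).sub (hT' v x)).neg)
        (fun x => (abs_sub _ _).trans (add_le_add le_rfl
          ((abs_sub _ _).trans (add_le_add (hTb u _) (hTb v _)))))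
        (fun x => by
          rw [abs_neg]
          exact (abs_sub _ _).trans (add_le_add (hL' u _) (hL' v _))) ?_
      intro x
      rw [hmM]
      have h1 := hFlip u hu v hv x
      have h2 : M * (κ / M * dist u v) = κ * dist u v := by field_simp
      rw [mul_sub, h2]
      linarith
    intro x
    linarith [this x]
  have hcontr : ContractingWith (Real.toNNReal (κ / M)) (hmaps.restrict T s s) := by
    refine ⟨?_, LipschitzWith.of_dist_le_mul ?_⟩
    · rw [Real.toNNReal_lt_one]
      exact (div_lt_one hM0).2 hκM
    · rintro ⟨u, hu⟩ ⟨v, hv⟩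
      rw [Real.coe_toNNReal _ (by positivity)]
      change dist (T u) (T v) ≤ κ / M * dist u v
      rw [dist_le (mul_nonneg (by positivity) dist_nonneg)]
      intro x
      rw [Real.dist_eq, abs_le]
      have h1 := hTlip u hu v hv x
      have h2 := hTlip v hv u hu x
      rw [dist_comm] at h2
      exact ⟨by linarith, h1⟩
  have hβs : ofNormedAddCommGroup β hβc B hβb ∈ s := fun x => ⟨hβε x, le_rfl, hβp x⟩
  obtain ⟨u, hus, hfix, -⟩ := hcontr.exists_fixedPoint' hsclosed.isComplete hmaps hβs
    (edist_ne_top _ _)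
  have hfix : T u = u := hfix
  have hd1 : ∀ x, HasDerivAt u (T' u x) x := fun x => by
    have := hT u x
    rwa [hfix] at this
  refine ⟨u, T' u, fun x => hε.trans_le (hus x).1, fun x => (hus x).2.2, fun x => ?_, hd1,
    fun x => ?_⟩
  · have h1 : HasDerivAt (fun y => u (y + 1)) (T' u (x + 1)) x :=
      (hd1 (x + 1)).comp_add_const x 1
    have h2 : (fun y => u (y + 1)) = u := funext fun y => (hus y).2.2
    rw [h2] at h1
    exact h1.unique (hd1 x)
  · refine (hT' u x).congr_deriv ?_
    rw [hfix, hFs u hus]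
    ring

lemma aux_boot {k : ℝ} {h v v' : ℝ → ℝ} (hh : ContDiff ℝ (⊤ : ℕ∞) h) (hv0 : ∀ x, 0 < v x)
    (hv : ∀ x, HasDerivAt v (v' x) x) (hv' : ∀ x, HasDerivAt v' (h x - k / v x) x) :
    ContDiff ℝ (⊤ : ℕ∞) v := by
  have hd : deriv v = v' := funext fun x => (hv x).deriv
  have hd' : deriv v' = fun x => h x - k / v x := funext fun x => (hv' x).deriv
  have key : ∀ n : ℕ, ContDiff ℝ n v ∧ ContDiff ℝ n v' := by
    intro n
    induction n with
    | zero =>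
      exact ⟨contDiff_zero.2 (continuous_iff_continuousAt.2 fun x => (hv x).continuousAt),
        contDiff_zero.2 (continuous_iff_continuousAt.2 fun x => (hv' x).continuousAt)⟩
    | succ n ih =>
      push_cast
      rw [contDiff_succ_iff_deriv, contDiff_succ_iff_deriv, hd, hd']
      refine ⟨⟨fun x => (hv x).differentiableAt, by simp, ih.2⟩,
        fun x => (hv' x).differentiableAt, by simp, ?_⟩
      exact (contDiff_infty.1 hh n).sub (contDiff_const.div ih.1 fun x => (hv0 x).ne')
  exact contDiff_infty.2 fun n => (key n).1

lemma aux_lin {h : ℝ → ℝ} (hh : ContDiff ℝ (⊤ : ℕ∞) h)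
    (hper : Function.Periodic h 1) (hint : ∫ x in (0 : ℝ)..1, h x = 0) :
    ∃ v v' : ℝ → ℝ, (∀ x, 0 < v x) ∧ Function.Periodic v 1 ∧
      (∀ x, HasDerivAt v (v' x) x) ∧ (∀ x, HasDerivAt v' (h x) x) ∧
      ContDiff ℝ (⊤ : ℕ∞) v ∧ ∫ x in (0 : ℝ)..1, 1 / v x = 1 := by
  obtain ⟨H, H', hH, hH', hHs, hHp, hHp'⟩ := aux_antideriv2 hh hper hint
  have hHc := hHs.continuous
  have hHc' : Continuous H' := continuous_iff_continuousAt.2 fun x => (hH' x).continuousAt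
  obtain ⟨L, hL0, hL⟩ := aux_bdd hHc' hHp'
  obtain ⟨x0, hx0⟩ : ∃ x0, ∀ x, H x0 ≤ H x := by
    obtain ⟨y, ⟨x0, rfl⟩, hx0⟩ := (hHp.compact_of_continuous one_ne_zero hHc).exists_isLeast
      (range_nonempty H)
    exact ⟨x0, fun x => hx0 (mem_range_self x)⟩
  have hlip : ∀ x, x0 ≤ x → H x - H x0 ≤ L * (x - x0) := by
    intro x hx
    have := Convex.norm_image_sub_le_of_norm_hasDerivWithin_le (f := H) (f' := H') (s := univ)
      (C := L) (fun x _ => (hH x).hasDerivWithinAt) (fun x _ => hL x) convex_univ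
      (mem_univ x0) (mem_univ x)
    rw [Real.norm_eq_abs, Real.norm_eq_abs, abs_of_nonneg (sub_nonneg.2 hx)] at this
    exact (le_abs_self _).trans this
  -- the integral as a function of log of the shift
  let V : ℝ → ℝ → ℝ := fun t x => H x - H x0 + Real.exp t
  have hV0 : ∀ t x, 0 < V t x := fun t x => by
    have := hx0 x
    have := Real.exp_pos t
    simp only [V]; linarith
  have hVc : Continuous (Function.uncurry V) := by
    simp only [V, Function.uncurry_def]; fun_prop
  have hVc1 : ∀ t, Continuous fun x => 1 / V t x := fun t =>
    continuous_const.div (by simp only [V]; fun_prop) fun x => (hV0 t x).ne'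
  let I : ℝ → ℝ := fun t => ∫ x in x0..(x0 + 1), 1 / V t x
  have hIc : Continuous I := by
    apply intervalIntegral.continuous_parametric_intervalIntegral_of_continuous'
    exact continuous_const.div hVc fun p => (hV0 _ _).ne'
  have hIhi : I 0 ≤ 1 := by
    have h1 : I 0 ≤ ∫ x in x0..(x0 + 1), (1 : ℝ) := by
      refine intervalIntegral.integral_mono_on (by linarith) ((hVc1 0).intervalIntegrable _ _)
        (by simp) fun x _ => ?_
      rw [div_le_one (hV0 0 x)]
      have := hx0 x
      simp only [V, Real.exp_zero]; linarith
    simpa using h1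
  obtain ⟨t1, hIlo⟩ : ∃ t1, 1 ≤ I t1 := by
    let e := Real.log (L / (Real.exp L))
    refine ⟨e, ?_⟩
    have hee : Real.exp e = L / Real.exp L := Real.exp_log (by positivity)
    have he0 : 0 < Real.exp e := Real.exp_pos _
    have hg : ∀ x ∈ Icc x0 (x0 + 1), L * (x - x0) + Real.exp e ≠ 0 := fun x hx => by
      have : 0 ≤ L * (x - x0) := mul_nonneg hL0.le (by linarith [hx.1])
      linarith
    have hle : x0 ≤ x0 + 1 := by linarith
    have hgc : ContinuousOn (fun x => 1 / (L * (x - x0) + Real.exp e)) (uIcc x0 (x0 + 1)) := by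
      rw [uIcc_of_le hle]
      exact continuousOn_const.div (by fun_prop) hg
    have h1 : ∫ x in x0..(x0 + 1), 1 / (L * (x - x0) + Real.exp e) ≤ I e := by
      refine intervalIntegral.integral_mono_on hle hgc.intervalIntegrable
        ((hVc1 e).intervalIntegrable _ _) fun x hx => ?_
      apply one_div_le_one_div_of_le (hV0 e x)
      have := hlip x hx.1
      simp only [V]; linarith
    have h2 : ∫ x in x0..(x0 + 1), 1 / (L * (x - x0) + Real.exp e)
        = Real.log (L * (x0 + 1 - x0) + Real.exp e) / L
          - Real.log (L * (x0 - x0) + Real.exp e) / L := by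
      refine intervalIntegral.integral_eq_sub_of_hasDerivAt
        (f := fun x => Real.log (L * (x - x0) + Real.exp e) / L) (fun x hx => ?_)
        hgc.intervalIntegrable
      rw [uIcc_of_le hle] at hx
      have h3 : HasDerivAt (fun x => L * (x - x0) + Real.exp e) (L * 1) x :=
        (((hasDerivAt_id x).sub_const x0).const_mul L).add_const _
      refine ((h3.log (hg x hx)).div_const L).congr_deriv ?_
      have := hg x hx
      field_simp
    have h4 : Real.log L ≤ Real.log (L * (x0 + 1 - x0) + Real.exp e) := by
      apply Real.log_le_log hL0
      have : L * (x0 + 1 - x0) = L := by ring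
      linarith
    have h5 : Real.log (L * (x0 - x0) + Real.exp e) = Real.log L - L := by
      rw [sub_self, mul_zero, zero_add, hee, Real.log_div hL0.ne' (Real.exp_pos _).ne',
        Real.log_exp]
    rw [h2, h5, ← sub_div] at h1
    refine le_trans ?_ h1
    rw [le_div_iff₀ hL0]
    linarith
  obtain ⟨t, ht⟩ : ∃ t, I t = 1 := mem_range_of_exists_le_of_exists_ge hIc ⟨0, hIhi⟩ ⟨t1, hIlo⟩
  have hVp : Function.Periodic (V t) 1 := fun x => by simp only [V, hHp x]
  have hVd : ∀ x, HasDerivAt (V t) (H' x) x := fun x => ((hH x).sub_const _).add_const _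
  refine ⟨V t, H', hV0 t, hVp, hVd, hH', ?_, ?_⟩
  · exact (hHs.sub contDiff_const).add contDiff_const
  · have hq : Function.Periodic (fun x => 1 / V t x) 1 := fun x => by simp only [hVp x]
    have := hq.intervalIntegral_add_eq x0 0
    rw [zero_add] at this
    rw [← this]; exact ht

/-- common form of both cases -/
lemma aux_main {k : ℝ} (hk : 0 ≤ k) {h : ℝ → ℝ} (hh : ContDiff ℝ (⊤ : ℕ∞) h)
    (hper : Function.Periodic h 1) (hint : ∫ x in (0 : ℝ)..1, h x = k) :
    ∃ v v' : ℝ → ℝ, (∀ x, 0 < v x) ∧ Function.Periodic v 1 ∧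
      (∀ x, HasDerivAt v (v' x) x) ∧ (∀ x, HasDerivAt v' (h x - k / v x) x) ∧
      ContDiff ℝ (⊤ : ℕ∞) v ∧ ∫ x in (0 : ℝ)..1, 1 / v x = 1 := by
  rcases hk.eq_or_lt with hk0 | hk0
  · subst hk0
    simpa using aux_lin hh hper hint
  · obtain ⟨v, v', h0, hp, hp', h1, h2⟩ := aux_sing hk0 hh hper (by rw [hint]; exact hk0)
    have hs := aux_boot hh h0 h1 h2
    refine ⟨v, v', h0, hp, h1, h2, hs, ?_⟩
    have hc : Continuous fun x => 1 / v x :=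
      continuous_const.div hs.continuous fun x => (h0 x).ne'
    have e : (fun x => h x - k / v x) = fun x => h x - k * (1 / v x) := by
      funext x; ring
    have h3 : ∫ x in (0 : ℝ)..1, (h x - k * (1 / v x)) = v' 1 - v' 0 := by
      refine intervalIntegral.integral_eq_sub_of_hasDerivAt
        (fun x _ => (h2 x).congr_deriv (congrFun e x)) ?_
      exact (hh.continuous.sub (continuous_const.mul hc)).intervalIntegrable _ _
    have hc2 : Continuous fun x => k * (1 / v x) := continuous_const.mul hc
    have h4 := hp' 0
    rw [zero_add] at h4
    rw [intervalIntegral.integral_sub (hh.continuous.intervalIntegrable _ _)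
      (hc2.intervalIntegrable _ _), intervalIntegral.integral_const_mul,
      hint, h4, sub_self] at h3
    have h5 : k * (∫ x in (0 : ℝ)..1, 1 / v x) = k * 1 := by linarith
    exact mul_left_cancel₀ hk0.ne' h5


/-- Solvability of the reduced coupled dHYM ODE on an abelian surface. -/
theorem stmt_1 (α a b c : ℝ) (hα : 0 < α)
    (d τ D C S : ℝ) (hd : d = a * c - b ^ 2) (hτ : τ = a + c)
    (hD : D = Real.sqrt ((1 - d) ^ 2 + τ ^ 2))
    (hC : C = (1 - d) / D) (hS : S = -τ / D)
    (A : ℝ → ℝ) (hA : ContDiff ℝ (⊤ : ℕ∞) A) (hAper : Function.Periodic A 1)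
    (hint : ∫ x in (0 : ℝ)..1, A x = -(α * D)) :
    ∃ φ : ℝ → ℝ, ContDiff ℝ (⊤ : ℕ∞) φ ∧ Function.Periodic φ 1 ∧
      (∀ x, 0 < 1 + deriv (deriv φ) x) ∧
      ∀ x, -(1 / 4) * deriv (deriv (fun y => 1 / (1 + deriv (deriv φ) y))) x
            - α * b ^ 2 * (1 + deriv (deriv φ) x) / (C - c * S)
            + α * (c ^ 2 + 1) / (c * S - C) = A x := by
  have hN : 0 < 1 + b ^ 2 + c ^ 2 := by positivity
  have hid : (1 - d) + c * τ = 1 + b ^ 2 + c ^ 2 := by rw [hd, hτ]; ring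
  have hD0 : 0 < D := by
    rw [hD]
    apply Real.sqrt_pos.2
    by_contra hcon
    have h1 : (1 - d) = 0 := by nlinarith [sq_nonneg (1 - d), sq_nonneg τ]
    have h2 : τ = 0 := by nlinarith [sq_nonneg (1 - d), sq_nonneg τ]
    rw [h1, h2] at hid
    linarith
  have hK : C - c * S = (1 + b ^ 2 + c ^ 2) / D := by
    rw [hC, hS, ← hid]; field_simp; ring
  have hK' : c * S - C = -((1 + b ^ 2 + c ^ 2) / D) := by rw [← hK]; ring
  obtain ⟨K, hKd⟩ : ∃ K, K = (1 + b ^ 2 + c ^ 2) / D := ⟨_, rfl⟩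
  have hK0 : 0 < K := by rw [hKd]; positivity
  have hKD : K * D = 1 + b ^ 2 + c ^ 2 := by rw [hKd]; field_simp
  rw [hK, hK', ← hKd]
  obtain ⟨v, v', h0, hp, h1, h2, hs, hi⟩ := aux_main (k := 4 * (α * b ^ 2 / K))
    (h := fun x => -4 * (A x + α * (c ^ 2 + 1) / K)) (by positivity)
    (contDiff_const.mul (hA.add contDiff_const)) (fun x => by simp only [hAper x]) (by
      rw [intervalIntegral.integral_const_mul, intervalIntegral.integral_add
        (hA.continuous.intervalIntegrable _ _) (by simp), hint]
      simp
      field_simp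
      linear_combination hKD)
  have hus : ContDiff ℝ (⊤ : ℕ∞) fun x => 1 / v x - 1 :=
    (contDiff_const.div hs fun x => (h0 x).ne').sub contDiff_const
  obtain ⟨φ, φ', hφ, hφ', hφs, hφp, -⟩ := aux_antideriv2 hus (fun x => by simp only [hp x]) (by
    have hc : Continuous fun x => 1 / v x :=
      continuous_const.div hs.continuous fun x => (h0 x).ne'
    rw [intervalIntegral.integral_sub (hc.intervalIntegrable _ _) (by simp), hi]
    simp)
  have e1 : deriv φ = φ' := funext fun x => (hφ x).deriv
  have e2 : ∀ x, 1 + deriv (deriv φ) x = 1 / v x := fun x => by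
    rw [e1, (hφ' x).deriv]; ring
  have e3 : (fun y => 1 / (1 + deriv (deriv φ) y)) = v := by
    funext y; rw [e2, one_div_one_div]
  have e4 : deriv v = v' := funext fun x => (h1 x).deriv
  refine ⟨φ, hφs, hφp, fun x => ?_, fun x => ?_⟩
  · rw [e2]; exact one_div_pos.2 (h0 x)
  · rw [e3, e2, e4, (h2 x).deriv]
    have := (h0 x).ne'
    field_simp
    ring
end

section
/- Let K > 0 and M be real constants and let A : ℝ → ℝ be a continuous 1-periodic function. Suppose φ : ℝ → ℝ is four times continuously differentiable, 1-periodic, with w(x) := 1 + φ''(x) > 0 for all x, and satisfies −(1/4)·(1/w)''(x) − K·w(x) + M = A(x) for all x ∈ ℝ. Then w(x) ≤ (M + sup|A|)/K for all x ∈ ℝ. -/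
lemma deriv2_nonneg_of_min {f : ℝ → ℝ} {a : ℝ} (hc : ContinuousAt f a)
    (h : ∀ y, f a ≤ f y) : 0 ≤ deriv (deriv f) a := by
  by_contra hn
  have hn : deriv (deriv f) a < 0 := not_le.mp hn
  have hmin : IsLocalMin f a := Filter.Eventually.of_forall h
  have hmax := isLocalMax_of_deriv_deriv_neg hn hmin.deriv_eq_zero hc
  have he : f =ᶠ[nhds a] fun _ => f a := by
    filter_upwards [hmax] with y hy using le_antisymm hy (h y)
  have h2 := he.deriv.deriv_eq
  simp at h2
  linarith

/-- Maximum-principle a priori bound for the reduced ODE: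
    if −(1/4)(1/w)'' − K·w + M = A with w = 1 + φ'' > 0, then w ≤ (M + sup|A|)/K. -/
theorem stmt_2 (K M : ℝ) (hK : 0 < K)
    (A : ℝ → ℝ) (hA : Continuous A) (hAper : Function.Periodic A 1)
    (φ : ℝ → ℝ) (hφ : ContDiff ℝ 4 φ) (hφper : Function.Periodic φ 1)
    (hw : ∀ x, 0 < 1 + deriv (deriv φ) x)
    (heq : ∀ x, -(1 / 4) * deriv (deriv (fun y => 1 / (1 + deriv (deriv φ) y))) x
        - K * (1 + deriv (deriv φ) x) + M = A x) :
    ∀ x, 1 + deriv (deriv φ) x ≤ (M + ⨆ y, |A y|) / K := by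
  have hper : ∀ g : ℝ → ℝ, Function.Periodic g 1 → Function.Periodic (deriv g) 1 := by
    intro g hg x
    rw [← deriv_comp_add_const]
    congr 1
    exact funext hg
  have hp2 := hper _ (hper _ hφper)
  have hc : Continuous (deriv (deriv φ)) := by
    have := hφ.continuous_iteratedDeriv 2 (by norm_num)
    simpa [iteratedDeriv_succ, iteratedDeriv_zero] using this
  obtain ⟨a, -, ha⟩ := (isCompact_Icc (a := (0:ℝ)) (b := 1)).exists_isMaxOn
    (Set.nonempty_Icc.2 zero_le_one) hc.continuousOn
  have hmax : ∀ y, deriv (deriv φ) y ≤ deriv (deriv φ) a := by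
    intro y
    obtain ⟨z, hz, hyz⟩ := hp2.exists_mem_Ico₀ one_pos y
    rw [hyz]
    exact ha (Set.Ico_subset_Icc_self hz)
  have hbdd : BddAbove (Set.range fun y => |A y|) := by
    obtain ⟨C, hC⟩ := (isCompact_Icc (a := (0:ℝ)) (b := 1)).bddAbove_image hA.abs.continuousOn
    refine ⟨C, ?_⟩
    rintro _ ⟨y, rfl⟩
    obtain ⟨z, hz, hyz⟩ := hAper.exists_mem_Ico₀ one_pos y
    show |A y| ≤ C
    rw [hyz]
    exact hC ⟨z, Set.Ico_subset_Icc_self hz, rfl⟩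
  have hd : 0 ≤ deriv (deriv (fun y => 1 / (1 + deriv (deriv φ) y))) a := by
    apply deriv2_nonneg_of_min
    · exact (continuous_const.div (continuous_const.add hc) fun y => (hw y).ne').continuousAt
    · intro y
      exact one_div_le_one_div_of_le (hw y) (by linarith [hmax y])
  intro x
  rw [le_div_iff₀ hK]
  have h1 := heq a
  have h2 : |A a| ≤ ⨆ y, |A y| := le_ciSup hbdd a
  have h3 := neg_abs_le (A a)
  have h4 := mul_le_mul_of_nonneg_left (hmax x) hK.le
  linarith
end

section
/- Let a, b, c, p be real numbers with 1 + p ≠ 0. Set d = ac − b², τ = a + c, D = √((1−d)² + τ²), C = (1−d)/D, S = −τ/D, and define q = −(S·(1−d) + C·τ + p·(c·C + S))/(C − c·S). Let z = (1 − d + p − c·q) − i·(τ + q + c·p) ∈ ℂ. Then Im((C − i·S)·z) = 0, and Re((C − i·S)·z)/(1+p) = b²/((1+p)·(C − c·S)) − (c²+1)/(c·S − C). -/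
/-- With q solving the dHYM equation, Im((C − iS)·z) = 0 and
    Re((C − iS)·z)/(1+p) = b²/((1+p)(C − cS)) − (c²+1)/(cS − C). -/
theorem stmt_5 (a b c p : ℝ) (hp : 1 + p ≠ 0)
    (d τ D C S q : ℝ)
    (hd : d = a * c - b ^ 2) (hτ : τ = a + c)
    (hD : D = Real.sqrt ((1 - d) ^ 2 + τ ^ 2))
    (hC : C = (1 - d) / D) (hS : S = -τ / D)
    (hq : q = -(S * (1 - d) + C * τ + p * (c * C + S)) / (C - c * S))
    (z : ℂ)
    (hz : z = ((1 - d + p - c * q : ℝ) : ℂ) - Complex.I * ((τ + q + c * p : ℝ) : ℂ)) :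
    (((C : ℂ) - Complex.I * (S : ℂ)) * z).im = 0 ∧
    (((C : ℂ) - Complex.I * (S : ℂ)) * z).re / (1 + p) =
      b ^ 2 / ((1 + p) * (C - c * S)) - (c ^ 2 + 1) / (c * S - C) := by
  have hk : (1 - d) + c * τ = 1 + b ^ 2 + c ^ 2 := by rw [hd, hτ]; ring
  have hkpos : 0 < (1 - d) + c * τ := by rw [hk]; positivity
  have hsq : 0 < (1 - d) ^ 2 + τ ^ 2 := by
    by_contra h
    have h1 : 1 - d = 0 := by nlinarith [sq_nonneg (1 - d), sq_nonneg τ]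
    have h2 : τ = 0 := by nlinarith [sq_nonneg (1 - d), sq_nonneg τ]
    rw [h1, h2] at hkpos
    simp at hkpos
  have hDpos : 0 < D := by rw [hD]; exact Real.sqrt_pos.mpr hsq
  have hD2 : D ^ 2 = (1 - d) ^ 2 + τ ^ 2 := by rw [hD]; exact Real.sq_sqrt hsq.le
  have hCD : 1 - d = C * D := by rw [hC]; field_simp
  have hSD : τ = -(S * D) := by rw [hS]; field_simp
  have hCS : C ^ 2 + S ^ 2 = 1 := by
    rw [hCD, hSD] at hD2
    have : D ^ 2 * (C ^ 2 + S ^ 2) = D ^ 2 * 1 := by linarith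
    exact mul_left_cancel₀ (by positivity) this
  have hED : (C - c * S) * D = 1 + b ^ 2 + c ^ 2 := by
    rw [← hk, hCD, hSD]; ring
  have hE : C - c * S ≠ 0 := by
    intro h
    rw [h] at hED
    nlinarith [sq_nonneg b, sq_nonneg c]
  have hqE : q * (C - c * S) = -(S * (1 - d) + C * τ + p * (c * C + S)) := by
    rw [hq, div_mul_cancel₀ _ hE]
  have him : (((C : ℂ) - Complex.I * (S : ℂ)) * z).im
      = -(C * (τ + q + c * p) + S * (1 - d + p - c * q)) := by
    rw [hz]
    simp only [Complex.mul_im, Complex.sub_re, Complex.sub_im, Complex.mul_re,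
      Complex.I_re, Complex.I_im, Complex.ofReal_re, Complex.ofReal_im]
    ring
  have hre : (((C : ℂ) - Complex.I * (S : ℂ)) * z).re
      = C * (1 - d + p - c * q) - S * (τ + q + c * p) := by
    rw [hz]
    simp only [Complex.mul_im, Complex.sub_re, Complex.sub_im, Complex.mul_re,
      Complex.I_re, Complex.I_im, Complex.ofReal_re, Complex.ofReal_im]
    ring
  refine ⟨by rw [him]; linarith, ?_⟩
  have hneg : (c ^ 2 + 1) / (c * S - C) = -((c ^ 2 + 1) / (C - c * S)) := by
    rw [← neg_sub C (c * S), div_neg]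
  have key : (C * (1 - d + p - c * q) - S * (τ + q + c * p)) * (C - c * S)
      = b ^ 2 + (1 + p) * (c ^ 2 + 1) := by
    rw [hCD, hSD] at *
    linear_combination (-(c * C + S)) * hqE + hED +
      (p * (1 + c ^ 2) + (C - c * S) * D) * hCS
  rw [hre, hneg, eq_div_of_mul_eq hE key]
  field_simp
  ring
end

section
/- Let n be a positive integer, μ ≥ 0, and let φ : ℝⁿ → ℝ be a twice continuously differentiable function that is ℤⁿ-periodic (φ(x + k) = φ(x) for all x ∈ ℝⁿ and k ∈ ℤⁿ) and whose Hessian satisfies D²φ(x)[v, v] ≥ −μ·‖v‖² for all x, v ∈ ℝⁿ. Then sup φ − inf φ ≤ μ·n/8. -/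
lemma aux_translate (n : ℕ) (z : EuclideanSpace ℝ (Fin n)) :
    ∃ k : Fin n → ℤ, ‖z + (WithLp.equiv 2 (Fin n → ℝ)).symm (fun i => (k i : ℝ))‖ ^ 2
      ≤ (n : ℝ) / 4 := by
  refine ⟨fun i => - round (z i), ?_⟩
  rw [EuclideanSpace.norm_sq_eq]
  have : ∀ i ∈ Finset.univ, ‖(z + (WithLp.equiv 2 (Fin n → ℝ)).symm
      (fun i => ((- round (z i) : ℤ) : ℝ))) i‖ ^ 2 ≤ (1 / 4 : ℝ) := by
    intro i _
    have h := abs_sub_round (z i)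
    have e : (z + (WithLp.equiv 2 (Fin n → ℝ)).symm
      (fun i => ((- round (z i) : ℤ) : ℝ))) i = z i - round (z i) := by
      simp [sub_eq_add_neg]
    rw [e, Real.norm_eq_abs]
    nlinarith [abs_nonneg (z i - round (z i))]
  refine (Finset.sum_le_sum this).trans ?_
  simp
  linarith

lemma aux_taylor {E : Type*} [NormedAddCommGroup E] [NormedSpace ℝ E] (μ : ℝ)
    (φ : E → ℝ) (hφ : ContDiff ℝ 2 φ)
    (hHess : ∀ (x v : E), -μ * ‖v‖ ^ 2 ≤ iteratedFDeriv ℝ 2 φ x ![v, v])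
    (p v : E) (hp : ∀ x, φ x ≤ φ p) : φ p - μ / 2 * ‖v‖ ^ 2 ≤ φ (p + v) := by
  have hl : ∀ t : ℝ, HasDerivAt (fun t : ℝ => p + t • v) v t := by
    intro t
    simpa using ((hasDerivAt_id t).smul_const v).const_add p
  have hd : Differentiable ℝ φ := hφ.differentiable (by norm_num)
  have hd2 : Differentiable ℝ (fderiv ℝ φ) :=
    (hφ.fderiv_right (m := 1) (by norm_num)).differentiable (by norm_num)
  have h1 : ∀ t : ℝ, HasDerivAt (fun t : ℝ => φ (p + t • v) + μ / 2 * ‖v‖ ^ 2 * t ^ 2)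
      (fderiv ℝ φ (p + t • v) v + μ * ‖v‖ ^ 2 * t) t := by
    intro t
    have a := (hd (p + t • v)).hasFDerivAt.comp_hasDerivAt t (hl t)
    have b := ((hasDerivAt_id t).pow 2).const_mul (μ / 2 * ‖v‖ ^ 2)
    refine (a.add b).congr_deriv ?_
    simp
    ring
  have h2 : ∀ t : ℝ, HasDerivAt (fun t : ℝ => fderiv ℝ φ (p + t • v) v + μ * ‖v‖ ^ 2 * t)
      (fderiv ℝ (fderiv ℝ φ) (p + t • v) v v + μ * ‖v‖ ^ 2) t := by
    intro t
    have a := (hd2 (p + t • v)).hasFDerivAt.comp_hasDerivAt t (hl t)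
    have a' := a.clm_apply (hasDerivAt_const t v)
    have b := (hasDerivAt_id t).const_mul (μ * ‖v‖ ^ 2)
    refine (a'.add b).congr_deriv ?_
    simp
  have hmono : Monotone (fun t : ℝ => fderiv ℝ φ (p + t • v) v + μ * ‖v‖ ^ 2 * t) := by
    refine monotone_of_deriv_nonneg (fun t => (h2 t).differentiableAt) fun t => ?_
    rw [(h2 t).deriv]
    have := hHess (p + t • v) v
    rw [iteratedFDeriv_two_apply] at this
    simp at this
    linarith
  have h0 : fderiv ℝ φ p = 0 :=
    IsLocalMax.fderiv_eq_zero (Filter.Eventually.of_forall hp)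
  have hm : MonotoneOn (fun t : ℝ => φ (p + t • v) + μ / 2 * ‖v‖ ^ 2 * t ^ 2) (Set.Ici 0) := by
    refine monotoneOn_of_deriv_nonneg (convex_Ici 0)
      (fun t _ => (h1 t).continuousAt.continuousWithinAt)
      (fun t _ => (h1 t).differentiableAt.differentiableWithinAt) fun t ht => ?_
    rw [(h1 t).deriv]
    rw [interior_Ici] at ht
    have := hmono (le_of_lt ht)
    simpa [h0] using this
  have := hm (Set.mem_Ici.2 le_rfl) (Set.mem_Ici.2 zero_le_one) zero_le_one
  simp at this
  linarith

/-- Oscillation bound for a ℤⁿ-periodic C² function with Hessian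
    bounded below by −μ·Id: sup φ − inf φ ≤ μ·n/8. -/
theorem stmt_14 (n : ℕ) (hn : 0 < n) (μ : ℝ) (hμ : 0 ≤ μ)
    (φ : EuclideanSpace ℝ (Fin n) → ℝ) (hφ : ContDiff ℝ 2 φ)
    (hper : ∀ (x : EuclideanSpace ℝ (Fin n)) (k : Fin n → ℤ),
      φ (x + (WithLp.equiv 2 (Fin n → ℝ)).symm (fun i => (k i : ℝ))) = φ x)
    (hHess : ∀ (x v : EuclideanSpace ℝ (Fin n)),
      -μ * ‖v‖ ^ 2 ≤ iteratedFDeriv ℝ 2 φ x ![v, v]) :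
    (⨆ x, φ x) - (⨅ x, φ x) ≤ μ * n / 8 := by
  obtain ⟨p, hp⟩ : ∃ p, ∀ x, φ x ≤ φ p := by
    obtain ⟨p, -, hp⟩ := (isCompact_closedBall (0 : EuclideanSpace ℝ (Fin n))
      (√((n : ℝ) / 4))).exists_isMaxOn ⟨0, by simp; positivity⟩ hφ.continuous.continuousOn
    refine ⟨p, fun x => ?_⟩
    obtain ⟨k, hk⟩ := aux_translate n x
    rw [← hper x k]
    apply hp
    rw [mem_closedBall_zero_iff]
    exact Real.le_sqrt_of_sq_le hk
  have hlow : ∀ y, φ p - μ * n / 8 ≤ φ y := by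
    intro y
    obtain ⟨k, hk⟩ := aux_translate n (y - p)
    have h := aux_taylor μ φ hφ hHess p (hp := hp) (v := y - p +
      (WithLp.equiv 2 (Fin n → ℝ)).symm (fun i => (k i : ℝ)))
    rw [← add_assoc, add_sub_cancel, hper] at h
    nlinarith [mul_le_mul_of_nonneg_left hk hμ]
  have a := ciSup_le hp
  have b := le_ciInf hlow
  linarith
end
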